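/- arXiv:2012.09450 — 3 statements merged into one kernel-verified Lean document; each statement's English description precedes it below -/
import Mathlib

section
/- Suppose (X,d_X,μ_X) and (Y,d_Y,μ_Y) are metric measure spaces with doubling Borel measures, each of which is a Lipschitz differentiability space with systems of Lipschitz charts {(U_i, φ_i)}_{i∈ℕ} (with φ_i : X → ℝ^{m_i}) and {(V_j, ψ_j)}_{j∈ℕ} (with ψ_j : Y → ℝ^{n_j}) respectively. Then the product X × Y, equipped with the metric max{d_X, d_Y} and the product measure μ_X × μ_Y, is a metric measure space with doubling measure and is a Lipschitz differentiability space with the system of charts {(U_i × V_j, φ_i × ψ_j)}_{i,j∈ℕ}, where (φ_i × ψ_j)(x,y) = (φ_i(x), ψ_j(y)). Moreover, for every Lipschitz f : X × Y → ℝ and every i, j, for μ_X × μ_Y-a.e. (x₀,y₀) ∈ U_i × V_j, the (unique) derivative of f at (x₀,y₀) with respect to φ_i × ψ_j equals (D_X f(x₀,y₀), D_Y f(x₀,y₀)), where D_X f(x₀,y₀) and D_Y f(x₀,y₀) are the X- and Y-directional derivatives of f with respect to φ_i and ψ_j. -/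
open MeasureTheory Metric Filter Set
open scoped ENNReal NNReal

noncomputable section

/-- Dot product of two vectors in `ℝ^d`. -/
def dotp {d : ℕ} (v u : Fin d → ℝ) : ℝ := ∑ k, v k * u k

/-- `v` satisfies the first-order Taylor approximation property of `f` at `x` with respect
to the Lipschitz chart map `φ`:
`lim_{y→x} (f y − f x − v·(φ y − φ x)) / d(x,y) = 0`. -/
def HasChartDerivAt {X : Type*} [MetricSpace X] {d : ℕ}
    (φ : X → Fin d → ℝ) (f : X → ℝ) (x : X) (v : Fin d → ℝ) : Prop :=
  Filter.Tendsto (fun y => (f y - f x - dotp v (fun k => φ y k - φ x k)) / dist y x)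
    (nhdsWithin x {x}ᶜ) (nhds 0)

/-- A Borel measure is doubling: every ball has positive finite measure and doubling the
radius increases the measure by at most a fixed finite factor. -/
def IsDoublingMeasure {M : Type*} [PseudoMetricSpace M] [MeasurableSpace M]
    (μ : Measure M) : Prop :=
  ∃ CD : ℝ≥0∞, CD < ⊤ ∧ ∀ (x : M) (r : ℝ), 0 < r →
    0 < μ (Metric.ball x r) ∧ μ (Metric.ball x r) < ⊤ ∧
      μ (Metric.ball x (2 * r)) ≤ CD * μ (Metric.ball x r)

open Topology

lemma doub_sigmaFinite {M : Type*} [MetricSpace M] [MeasurableSpace M] [BorelSpace M]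
    {μ : Measure M} (h : IsDoublingMeasure μ) : SigmaFinite μ := by
  obtain ⟨C, hC, h⟩ := h
  rcases isEmpty_or_nonempty M with hM | ⟨⟨x⟩⟩
  · have : μ = 0 := Measure.eq_zero_of_isEmpty μ
    rw [this]; infer_instance
  · refine ⟨⟨⟨fun n => ball x (n + 1), fun _ => trivial, fun n => (h x _ (by positivity)).2.1, ?_⟩⟩⟩
    refine eq_univ_of_forall fun y => mem_iUnion.2 ?_
    obtain ⟨n, hn⟩ := exists_nat_gt (dist y x)
    exact ⟨n, by rw [mem_ball]; linarith⟩

lemma doub_secondCountable {M : Type*} [MetricSpace M] [MeasurableSpace M] [BorelSpace M]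
    {μ : Measure M} (h : IsDoublingMeasure μ) : SecondCountableTopology M := by
  have := doub_sigmaFinite h
  obtain ⟨C, hC, h⟩ := h
  refine Metric.secondCountable_of_almost_dense_set fun ε hε => ?_
  obtain ⟨u, -, hu, hcov⟩ := Vitali.exists_disjoint_subfamily_covering_enlargement_closedBall
    (univ : Set M) id (fun _ => ε / 5) (ε / 5) (fun _ _ => le_rfl) 5 (by norm_num)
  refine ⟨u, ?_, fun x => ?_⟩
  · have := Measure.countable_meas_pos_of_disjoint_iUnion (μ := μ)
      (As := fun a : u => closedBall (a : M) (ε / 5)) (fun _ => measurableSet_closedBall)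
      (fun a b hab => hu a.2 b.2 (fun h => hab (Subtype.ext h)))
    have h2 : {i : u | 0 < μ (closedBall (i : M) (ε / 5))} = univ :=
      eq_univ_of_forall fun a => lt_of_lt_of_le (h a (ε / 5) (by positivity)).1
        (measure_mono ball_subset_closedBall)
    rw [h2] at this
    exact countable_coe_iff.1 (countable_univ_iff.1 this)
  · obtain ⟨b, hb, hs⟩ := hcov x (mem_univ _)
    refine ⟨b, hb, ?_⟩
    have := hs (mem_closedBall_self (by positivity))
    simp only [id, mem_closedBall] at this
    linarith

lemma doub_unifLoc {M : Type*} [MetricSpace M] [MeasurableSpace M]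
    {μ : Measure M} (h : IsDoublingMeasure μ) : IsUnifLocDoublingMeasure μ := by
  obtain ⟨C, hC, h⟩ := h
  refine ⟨⟨(C * C).toNNReal, ?_⟩⟩
  filter_upwards [self_mem_nhdsWithin] with ε hε x
  have hε : 0 < ε := hε
  rw [ENNReal.coe_toNNReal (ENNReal.mul_ne_top hC.ne hC.ne)]
  calc μ (closedBall x (2 * ε)) ≤ μ (ball x (2 * (2 * ε))) :=
        measure_mono (closedBall_subset_ball (by linarith))
    _ ≤ C * μ (ball x (2 * ε)) := (h x _ (by positivity)).2.2
    _ ≤ C * (C * μ (ball x ε)) := by gcongr; exact (h x _ hε).2.2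
    _ ≤ C * C * μ (closedBall x ε) := by
        rw [mul_assoc]; gcongr; exact ball_subset_closedBall

lemma doub_locFinite {M : Type*} [MetricSpace M] [MeasurableSpace M]
    {μ : Measure M} (h : IsDoublingMeasure μ) : IsLocallyFiniteMeasure μ := by
  obtain ⟨C, hC, h⟩ := h
  exact ⟨fun x => ⟨ball x 1, ball_mem_nhds x one_pos, (h x 1 one_pos).2.1⟩⟩

lemma doub_prod {X Y : Type*} [MetricSpace X] [MeasurableSpace X] [BorelSpace X]
    [MetricSpace Y] [MeasurableSpace Y] [BorelSpace Y] {μ : Measure X} {ν : Measure Y}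
    (hμ : IsDoublingMeasure μ) (hν : IsDoublingMeasure ν) : IsDoublingMeasure (μ.prod ν) := by
  have := doub_sigmaFinite hμ
  have := doub_sigmaFinite hν
  obtain ⟨C, hC, h⟩ := hμ
  obtain ⟨D, hD, k⟩ := hν
  refine ⟨C * D, ENNReal.mul_lt_top hC hD, fun z r hr => ?_⟩
  obtain ⟨x, y⟩ := z
  rw [← ball_prod_same, ← ball_prod_same, Measure.prod_prod, Measure.prod_prod]
  obtain ⟨h1, h2, h3⟩ := h x r hr
  obtain ⟨k1, k2, k3⟩ := k y r hr
  refine ⟨ENNReal.mul_pos h1.ne' k1.ne', ENNReal.mul_lt_top h2 k2, ?_⟩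
  calc _ ≤ (C * μ (ball x r)) * (D * ν (ball y r)) := by gcongr
    _ = _ := by ring

/-- Approximate density (non-porosity) of `S` at `z`. -/
def NonPorousAt {M : Type*} [MetricSpace M] (S : Set M) (z : M) : Prop :=
  ∀ η > 0, ∃ ρ > 0, ∀ w, dist w z < ρ → ∃ s ∈ S, dist s w ≤ η * dist w z

lemma ae_nonPorous {M : Type*} [MetricSpace M] [MeasurableSpace M] [BorelSpace M]
    {μ : Measure M} (h : IsDoublingMeasure μ) {S : Set M} (hS : MeasurableSet S) :
    ∀ᵐ z ∂μ, z ∈ S → NonPorousAt S z := by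
  have := doub_secondCountable h
  have := doub_unifLoc h
  have := doub_locFinite h
  rw [← ae_restrict_iff' hS]
  have H : ∀ᵐ z ∂μ.restrict S, ∀ n : ℕ, _ :=
    ae_all_iff.2 fun n : ℕ =>
      IsUnifLocDoublingMeasure.ae_tendsto_measure_inter_div μ S ((n : ℝ) + 1)
  filter_upwards [H, ae_restrict_mem hS] with z hz hzS η hη
  obtain ⟨n, hn⟩ := exists_nat_one_div_lt hη
  have hn1 : (0 : ℝ) < n + 1 := by positivity
  have hlim : Tendsto (fun w => 1 / ((n : ℝ) + 1) * dist w z) (𝓝[≠] z) (𝓝[>] 0) := by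
    refine tendsto_nhdsWithin_iff.2 ⟨?_, ?_⟩
    · have : Tendsto (fun w => 1 / ((n : ℝ) + 1) * dist w z) (𝓝 z)
          (𝓝 (1 / ((n : ℝ) + 1) * dist z z)) := by
        apply Continuous.tendsto; fun_prop
      rw [dist_self, mul_zero] at this
      exact this.mono_left nhdsWithin_le_nhds
    · filter_upwards [self_mem_nhdsWithin] with w hw
      have : 0 < dist w z := dist_pos.2 hw
      exact mem_Ioi.2 (by positivity)
  have T := hz n (fun w => w) _ hlim (Eventually.of_forall fun w => by
    rw [mem_closedBall, ← mul_assoc, mul_one_div_cancel hn1.ne', one_mul, dist_comm])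
  have E := T.eventually (lt_mem_nhds (show (0 : ℝ≥0∞) < 1 from one_pos))
  obtain ⟨ρ, hρ, hE⟩ := Metric.eventually_nhds_iff.1 (eventually_nhdsWithin_iff.1 E)
  refine ⟨ρ, hρ, fun w hw => ?_⟩
  by_cases hwz : w = z
  · subst hwz; exact ⟨w, hzS, by simp⟩
  have h0 := hE hw hwz
  have : (S ∩ closedBall w (1 / ((n : ℝ) + 1) * dist w z)).Nonempty := by
    by_contra hne
    rw [not_nonempty_iff_eq_empty] at hne
    simp only [hne, measure_empty, ENNReal.zero_div, lt_irrefl] at h0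
  obtain ⟨s, hs, hsw⟩ := this
  exact ⟨s, hs, (mem_closedBall.1 hsw).trans (by gcongr)⟩

lemma dotp_bound {d : ℕ} (v u : Fin d → ℝ) : |dotp v u| ≤ d * ‖v‖ * ‖u‖ := by
  unfold dotp
  calc |∑ k, v k * u k| ≤ ∑ k, |v k * u k| := Finset.abs_sum_le_sum_abs _ _
    _ ≤ ∑ _k : Fin d, ‖v‖ * ‖u‖ := by
        refine Finset.sum_le_sum fun k _ => ?_
        rw [abs_mul]
        exact mul_le_mul (norm_le_pi_norm v k) (norm_le_pi_norm u k) (abs_nonneg _) (norm_nonneg _)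
    _ = _ := by simp [mul_assoc]

lemma dotp_sub_left {d : ℕ} (v w u : Fin d → ℝ) : dotp (v - w) u = dotp v u - dotp w u := by
  simp [dotp, sub_mul, Finset.sum_sub_distrib]

lemma dotp_sub_right {d : ℕ} (v u w : Fin d → ℝ) : dotp v (u - w) = dotp v u - dotp v w := by
  simp [dotp, mul_sub, Finset.sum_sub_distrib]

lemma dotp_append {a b : ℕ} (v v' : Fin a → ℝ) (w w' : Fin b → ℝ) :
    dotp (Fin.append v w) (Fin.append v' w') = dotp v v' + dotp w w' := by
  simp [dotp, Fin.sum_univ_add]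

lemma dotp_lip {X : Type*} [MetricSpace X] {d : ℕ} {φ : X → Fin d → ℝ} {L : ℝ≥0}
    (hφ : LipschitzWith L φ) (v : Fin d → ℝ) (x y : X) :
    |dotp v (φ y - φ x)| ≤ d * ‖v‖ * L * dist y x := by
  refine (dotp_bound _ _).trans ?_
  rw [mul_assoc _ (L : ℝ)]
  gcongr
  rw [← dist_eq_norm]
  exact hφ.dist_le_mul y x

lemma hasChart_iff {X : Type*} [MetricSpace X] {d : ℕ}
    {φ : X → Fin d → ℝ} {f : X → ℝ} {x : X} {v : Fin d → ℝ} :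
    HasChartDerivAt φ f x v ↔ ∀ ε > 0, ∃ δ > 0, ∀ y, dist y x < δ →
      |f y - f x - dotp v (φ y - φ x)| ≤ ε * dist y x := by
  unfold HasChartDerivAt
  rw [Metric.tendsto_nhdsWithin_nhds]
  have key : ∀ y, (fun k => φ y k - φ x k) = φ y - φ x := fun y => rfl
  simp only [key, dist_zero_right, norm_div, Real.norm_eq_abs, abs_of_nonneg dist_nonneg]
  constructor
  · intro h ε hε
    obtain ⟨δ, hδ, H⟩ := h ε hε
    refine ⟨δ, hδ, fun y hy => ?_⟩
    by_cases hyx : y = x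
    · subst hyx; simp [dotp]
    have := H (show y ∈ ({x}ᶜ : Set X) from hyx) hy
    rw [div_lt_iff₀ (dist_pos.2 hyx)] at this
    exact this.le
  · intro h ε hε
    obtain ⟨δ, hδ, H⟩ := h (ε / 2) (by positivity)
    refine ⟨δ, hδ, fun {y} hyx hy => ?_⟩
    have hp : 0 < dist y x := dist_pos.2 hyx
    rw [div_lt_iff₀ hp]
    refine (H y hy).trans_lt ?_
    gcongr
    linarith

/-- Points where the linear approximation `v` works at scale `δ` with error `ε`. -/
def goodS {W X : Type*} [MetricSpace X] {d : ℕ} (φ : X → Fin d → ℝ) (F : W × X → ℝ)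
    (v : Fin d → ℝ) (ε δ : ℝ) : Set (W × X) :=
  {z | ∀ x', dist x' z.2 < δ →
    |F (z.1, x') - F z - dotp v (φ x' - φ z.2)| ≤ ε * dist x' z.2}

lemma continuous_dotp {d : ℕ} (v : Fin d → ℝ) : Continuous (dotp v) := by
  unfold dotp; fun_prop

lemma isClosed_goodS {W X : Type*} [MetricSpace W] [MetricSpace X] {d : ℕ} {φ : X → Fin d → ℝ}
    {F : W × X → ℝ} (hφ : Continuous φ) (hF : Continuous F) (v : Fin d → ℝ) (ε δ : ℝ) :
    IsClosed (goodS φ F v ε δ) := by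
  have : goodS φ F v ε δ = ⋂ x', {z | δ ≤ dist x' z.2} ∪
      {z | |F (z.1, x') - F z - dotp v (φ x' - φ z.2)| ≤ ε * dist x' z.2} := by
    ext z
    simp only [goodS, mem_ofPred_eq, mem_iInter, mem_union]
    refine forall_congr' fun x' => ?_
    rw [imp_iff_not_or, not_lt]
  rw [this]
  have hv := continuous_dotp v
  refine isClosed_iInter fun x' => IsClosed.union ?_ ?_
  · exact isClosed_le (by fun_prop) (by fun_prop)
  · exact isClosed_le (by fun_prop) (by fun_prop)

/-- countable dense sequence of vectors -/
def dseq (d : ℕ) (q : ℕ) : Fin d → ℝ := TopologicalSpace.denseSeq (Fin d → ℝ) q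

def sc (k : ℕ) : ℝ := 1 / ((k : ℝ) + 1)

lemma sc_pos (k : ℕ) : 0 < sc k := by unfold sc; positivity

lemma exists_sc_lt {ε : ℝ} (h : 0 < ε) : ∃ k, sc k < ε := exists_nat_one_div_lt h

lemma exists_good {W X : Type*} [MetricSpace X] {d : ℕ} {φ : X → Fin d → ℝ} {L : ℝ≥0}
    (hφ : LipschitzWith L φ) {F : W × X → ℝ} {z : W × X} {v : Fin d → ℝ}
    (h : HasChartDerivAt φ (fun x => F (z.1, x)) z.2 v) {ε : ℝ} (hε : 0 < ε) :
    ∃ q l, ‖dseq d q‖ ≤ ‖v‖ + 1 ∧ z ∈ goodS φ F (dseq d q) ε (sc l) := by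
  obtain ⟨δ, hδ, H⟩ := hasChart_iff.1 h (ε / 2) (by positivity)
  obtain ⟨l, hl⟩ := exists_sc_lt hδ
  have hc : 0 < min 1 (ε / 2 / (d * L + 1)) := by positivity
  obtain ⟨q, hq⟩ := (TopologicalSpace.denseRange_denseSeq (Fin d → ℝ)).exists_dist_lt v hc
  have hq : dist v (dseq d q) < _ := hq
  rw [dist_eq_norm] at hq
  refine ⟨q, l, ?_, fun x' hx' => ?_⟩
  · have := norm_sub_norm_le (dseq d q) v
    rw [norm_sub_rev] at this
    have := hq.trans_le (min_le_left _ _)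
    linarith
  · have h1 := H x' (hx'.trans hl)
    have h2 := dotp_lip hφ (v - dseq d q) z.2 x'
    rw [dotp_sub_left] at h2
    have h3 : d * ‖v - dseq d q‖ * L * dist x' z.2 ≤ ε / 2 * dist x' z.2 := by
      gcongr
      have h4 := (hq.trans_le (min_le_right _ _)).le
      have h5 : (0 : ℝ) < d * L + 1 := by positivity
      rw [le_div_iff₀ h5] at h4
      nlinarith [norm_nonneg (v - dseq d q)]
    have e : F (z.1, z.2) = F z := rfl
    rw [e] at h1
    rw [abs_le] at *
    constructor <;> linarith [h1.1, h1.2, h2.1, h2.2]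

lemma exists_deriv_of_good {W X : Type*} [MetricSpace X] {d : ℕ} {φ : X → Fin d → ℝ} {L : ℝ≥0}
    (hφ : LipschitzWith L φ) {F : W × X → ℝ} {z : W × X} {N : ℝ}
    (h : ∀ k, ∃ q l, ‖dseq d q‖ ≤ N ∧ z ∈ goodS φ F (dseq d q) (sc k) (sc l)) :
    ∃ v, HasChartDerivAt φ (fun x => F (z.1, x)) z.2 v := by
  choose q l hN hz using h
  have hcpt : IsCompact (closedBall (0 : Fin d → ℝ) N) := isCompact_closedBall _ _
  obtain ⟨v, -, s, hs, hlim⟩ := hcpt.tendsto_subseq (x := fun k => dseq d (q k))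
    (fun k => by simpa using hN k)
  refine ⟨v, hasChart_iff.2 fun ε hε => ?_⟩
  have hc : 0 < ε / 2 / (d * L + 1) := by positivity
  have e1 := (Metric.tendsto_atTop.1 hlim) _ hc
  obtain ⟨N1, hN1⟩ := e1
  obtain ⟨k0, hk0⟩ := exists_sc_lt (half_pos hε)
  set K := max N1 k0
  have hK := hN1 K (le_max_left _ _)
  have hsK : sc (s K) ≤ ε / 2 := by
    refine le_trans ?_ hk0.le
    unfold sc
    have : (k0 : ℝ) ≤ s K := by exact_mod_cast (le_max_right N1 k0).trans (hs.id_le K)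
    gcongr
  refine ⟨sc (l (s K)), sc_pos _, fun y hy => ?_⟩
  have h1 := hz (s K) y hy
  have h2 := dotp_lip hφ (dseq d (q (s K)) - v) z.2 y
  rw [dotp_sub_left] at h2
  have h3 : d * ‖dseq d (q (s K)) - v‖ * L * dist y z.2 ≤ ε / 2 * dist y z.2 := by
    gcongr
    have h4 := hK.le
    simp only [Function.comp, dist_eq_norm] at h4
    have h5 : (0 : ℝ) < d * L + 1 := by positivity
    rw [le_div_iff₀ h5] at h4
    nlinarith [norm_nonneg (dseq d (q (s K)) - v)]
  have h6 : sc (s K) * dist y z.2 ≤ ε / 2 * dist y z.2 := by gcongr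
  have e : F (z.1, z.2) = F z := rfl
  simp only [e]
  rw [abs_le] at *
  constructor <;> linarith [h1.1, h1.2, h2.1, h2.2]

lemma slice_ae {W X : Type*} [MetricSpace W] [MeasurableSpace W] [BorelSpace W]
    [SecondCountableTopology W]
    [MetricSpace X] [MeasurableSpace X] [BorelSpace X]
    [SecondCountableTopology X] {ν : Measure W} {μ : Measure X} [SFinite ν] [SFinite μ]
    {d : ℕ} {φ : X → Fin d → ℝ} {L : ℝ≥0} (hφ : LipschitzWith L φ) {F : W × X → ℝ}
    (hF : Continuous F)
    (h : ∀ w, ∀ᵐ x ∂μ, ∃ v, HasChartDerivAt φ (fun x => F (w, x)) x v) :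
    ∀ᵐ z ∂(ν.prod μ), ∃ v, HasChartDerivAt φ (fun x => F (z.1, x)) z.2 v := by
  have hm : MeasurableSet {z : W × X | ∃ N : ℕ, ∀ k, ∃ q l, ‖dseq d q‖ ≤ N ∧
      z ∈ goodS φ F (dseq d q) (sc k) (sc l)} := by
    simp only [ofPred_exists, ofPred_forall]
    refine MeasurableSet.iUnion fun N => MeasurableSet.iInter fun k =>
      MeasurableSet.iUnion fun q => MeasurableSet.iUnion fun l => ?_
    exact (MeasurableSet.const _).inter
      (isClosed_goodS hφ.continuous hF _ _ _).measurableSet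
  have H := (Measure.ae_prod_mem_iff_ae_ae_mem (μ := ν) (ν := μ) hm).2 (by
    refine Eventually.of_forall fun w => ?_
    filter_upwards [h w] with x hx
    obtain ⟨v, hv⟩ := hx
    obtain ⟨N, hN⟩ := exists_nat_ge (‖v‖ + 1)
    refine ⟨N, fun k => ?_⟩
    obtain ⟨q, l, h1, h2⟩ := exists_good hφ (F := F) (z := (w, x)) hv (sc_pos k)
    exact ⟨q, l, h1.trans hN, h2⟩)
  filter_upwards [H] with z hz
  obtain ⟨N, hN⟩ := hz
  exact exists_deriv_of_good hφ hN

lemma joint {W X : Type*} [MetricSpace W] [MetricSpace X] {a d : ℕ} {θ : W → Fin a → ℝ}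
    {φ : X → Fin d → ℝ} {L : ℝ≥0} (hφ : LipschitzWith L φ) {F : W × X → ℝ} {K : ℝ≥0}
    (hF : LipschitzWith K F) {z : W × X} {u : Fin a → ℝ} {v : Fin d → ℝ}
    (hu : HasChartDerivAt θ (fun w => F (w, z.2)) z.1 u)
    (hv : HasChartDerivAt φ (fun x => F (z.1, x)) z.2 v)
    (hd : ∀ q k l, z ∈ goodS φ F (dseq d q) (sc k) (sc l) →
      NonPorousAt (goodS φ F (dseq d q) (sc k) (sc l)) z) :
    HasChartDerivAt (fun z' : W × X => Fin.append (θ z'.1) (φ z'.2)) F z (Fin.append u v) := by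
  obtain ⟨w0, x0⟩ := z
  simp only at hu hv
  refine hasChart_iff.2 fun ε hε => ?_
  obtain ⟨k, hk⟩ := exists_sc_lt (show 0 < ε / 10 by positivity)
  obtain ⟨q, l, -, hz⟩ := exists_good hφ (F := F) (z := (w0, x0)) hv (sc_pos k)
  have hsk := sc_pos k
  set e := sc k
  set p := dseq d q
  have hA : (0 : ℝ) < 2 * K + d * ‖p‖ * L + 1 := by positivity
  set η := min 1 (ε / 2 / (2 * K + d * ‖p‖ * L + 1)) with hη
  have hη0 : 0 < η := by positivity
  have hη1 : η ≤ 1 := min_le_left _ _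
  have hη2 : (2 * K + d * ‖p‖ * L) * η ≤ ε / 2 := by
    have := min_le_right 1 (ε / 2 / (2 * K + d * ‖p‖ * L + 1))
    rw [← hη, le_div_iff₀ hA] at this
    nlinarith
  obtain ⟨ρ, hρ, Hρ⟩ := hd q k l hz η hη0
  obtain ⟨δ1, hδ1, H1⟩ := hasChart_iff.1 hu e hsk
  obtain ⟨δ2, hδ2, H2⟩ := hasChart_iff.1 hv e hsk
  have hsl := sc_pos l
  refine ⟨min (min ρ (sc l / 2)) (min δ1 δ2), by positivity, ?_⟩
  rintro ⟨w, x⟩ hr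
  have hw : dist w w0 ≤ dist (w, x) (w0, x0) := by rw [Prod.dist_eq]; exact le_max_left _ _
  have hx : dist x x0 ≤ dist (w, x) (w0, x0) := by rw [Prod.dist_eq]; exact le_max_right _ _
  set r := dist (w, x) (w0, x0)
  simp only [lt_min_iff] at hr
  obtain ⟨⟨hr1, hr2⟩, hr3, hr4⟩ := hr
  have hr0 : 0 ≤ r := dist_nonneg
  have hp : dist (w, x0) (w0, x0) = dist w w0 := by simp [Prod.dist_eq]
  obtain ⟨⟨w', x'⟩, hs, hsd⟩ := Hρ (w, x0) (by rw [hp]; linarith)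
  rw [hp] at hsd
  have hsd : dist (w', x') (w, x0) ≤ η * r := hsd.trans (by gcongr)
  have hw' : dist w' w ≤ η * r := le_trans (by rw [Prod.dist_eq]; exact le_max_left _ _) hsd
  have hx' : dist x' x0 ≤ η * r := le_trans (by rw [Prod.dist_eq]; exact le_max_right _ _) hsd
  have hηr : η * r ≤ r := by nlinarith
  have hxx : dist x x' ≤ 2 * r := by
    have := dist_triangle x x0 x'
    rw [dist_comm x0 x'] at this
    linarith
  have A1 : |F (w, x) - F (w', x)| ≤ K * (η * r) := by
    have := hF.dist_le_mul (w, x) (w', x)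
    rw [Real.dist_eq] at this
    refine this.trans ?_
    gcongr
    simpa [Prod.dist_eq, dist_comm] using hw'
  have A2 : |F (w', x') - F (w, x0)| ≤ K * (η * r) := by
    have := hF.dist_le_mul (w', x') (w, x0)
    rw [Real.dist_eq] at this
    exact this.trans (by gcongr)
  have A3 := hs x (show dist x x' < sc l by linarith)
  have A3' : e * dist x x' ≤ e * (2 * r) := by gcongr
  have A4 := dotp_lip hφ p x0 x'
  have A4' : d * ‖p‖ * L * dist x' x0 ≤ d * ‖p‖ * L * (η * r) := by gcongr
  have A5 := hz x (show dist x x0 < sc l by linarith)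
  have A6 := H2 x (by linarith)
  have A56 : e * dist x x0 ≤ e * r := by gcongr
  have A7 := H1 w (by linarith)
  have A7' : e * dist w w0 ≤ e * r := by gcongr
  have hap : Fin.append (θ w) (φ x) - Fin.append (θ w0) (φ x0)
      = Fin.append (θ w - θ w0) (φ x - φ x0) := by
    ext i
    refine Fin.addCases (fun i => ?_) (fun i => ?_) i <;> simp
  simp only [hap, dotp_append]
  simp only [dotp_sub_right] at *
  have B1 : (2 * K + d * ‖p‖ * L) * η * r ≤ ε / 2 * r := by gcongr
  have B2 : e * r ≤ ε / 10 * r := by gcongr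
  rw [abs_le] at *
  obtain ⟨a1, a1'⟩ := A1
  obtain ⟨a2, a2'⟩ := A2
  obtain ⟨a3, a3'⟩ := A3
  obtain ⟨a4, a4'⟩ := A4
  obtain ⟨a5, a5'⟩ := A5
  obtain ⟨a6, a6'⟩ := A6
  obtain ⟨a7, a7'⟩ := A7
  clear hη2 Hρ H1 H2 hd hu hv
  constructor <;> linarith

lemma unique_of_zero {X : Type*} [MetricSpace X] {d : ℕ} {φ : X → Fin d → ℝ} {g : X → ℝ} {x : X}
    (h0 : ∃! v, HasChartDerivAt φ (fun _ => 0) x v) {v w : Fin d → ℝ}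
    (hv : HasChartDerivAt φ g x v) (hw : HasChartDerivAt φ g x w) : v = w := by
  have h1 : HasChartDerivAt φ (fun _ => 0) x (v - w) := by
    refine hasChart_iff.2 fun ε hε => ?_
    obtain ⟨δ1, hδ1, H1⟩ := hasChart_iff.1 hv (ε / 2) (by positivity)
    obtain ⟨δ2, hδ2, H2⟩ := hasChart_iff.1 hw (ε / 2) (by positivity)
    refine ⟨min δ1 δ2, by positivity, fun y hy => ?_⟩
    have a := H1 y (hy.trans_le (min_le_left _ _))
    have b := H2 y (hy.trans_le (min_le_right _ _))
    rw [dotp_sub_left]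
    rw [abs_le] at *
    constructor <;> linarith [a.1, a.2, b.1, b.2]
  have h2 : HasChartDerivAt φ (fun _ => 0) x 0 := by
    refine hasChart_iff.2 fun ε hε => ⟨1, one_pos, fun y _ => ?_⟩
    simp only [dotp, Pi.zero_apply, zero_mul, Finset.sum_const_zero, sub_zero, abs_zero]
    positivity
  exact sub_eq_zero.1 (h0.unique h1 h2)

lemma append_sub_aux {a b : ℕ} (v v' : Fin a → ℝ) (w w' : Fin b → ℝ) :
    Fin.append v w - Fin.append v' w' = Fin.append (v - v') (w - w') := by
  ext i
  refine Fin.addCases (fun i => ?_) (fun i => ?_) i <;> simp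

lemma slices_of_joint {W X : Type*} [MetricSpace W] [MetricSpace X] {a d : ℕ}
    {θ : W → Fin a → ℝ} {φ : X → Fin d → ℝ} {F : W × X → ℝ} {z : W × X} {v : Fin (a + d) → ℝ}
    (h : HasChartDerivAt (fun z' : W × X => Fin.append (θ z'.1) (φ z'.2)) F z v) :
    HasChartDerivAt θ (fun w => F (w, z.2)) z.1 (fun i => v (Fin.castAdd d i)) ∧
    HasChartDerivAt φ (fun x => F (z.1, x)) z.2 (fun i => v (Fin.natAdd a i)) := by
  obtain ⟨w0, x0⟩ := z
  have hz : ∀ k : ℕ, ∀ u : Fin k → ℝ, dotp u 0 = 0 := fun k u => by simp [dotp]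
  rw [← Fin.append_castAdd_natAdd (f := v)] at h
  constructor
  · refine hasChart_iff.2 fun ε hε => ?_
    obtain ⟨δ, hδ, H⟩ := hasChart_iff.1 h ε hε
    refine ⟨δ, hδ, fun y hy => ?_⟩
    have := H (y, x0) (by simpa [Prod.dist_eq] using hy)
    simpa [append_sub_aux, dotp_append, hz, Prod.dist_eq] using this
  · refine hasChart_iff.2 fun ε hε => ?_
    obtain ⟨δ, hδ, H⟩ := hasChart_iff.1 h ε hε
    refine ⟨δ, hδ, fun y hy => ?_⟩
    have := H (w0, y) (by simpa [Prod.dist_eq] using hy)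
    simpa [append_sub_aux, dotp_append, hz, Prod.dist_eq] using this

/-- Tensorization of Lipschitz differentiability spaces (Theorem 3.5 of the paper):
the product of two doubling Lipschitz differentiability spaces, with the sup metric and
the product measure, is a doubling Lipschitz differentiability space whose charts are the
products of the charts, and the derivative of a Lipschitz function with respect to a
product chart is the pair of directional derivatives. -/
theorem statement5 {X Y : Type*}
    [MetricSpace X] [MeasurableSpace X] [BorelSpace X]
    [MetricSpace Y] [MeasurableSpace Y] [BorelSpace Y]
    (μX : Measure X) (μY : Measure Y)
    (hdX : IsDoublingMeasure μX) (hdY : IsDoublingMeasure μY)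
    (m : ℕ → ℕ) (U : ℕ → Set X) (hU : ∀ i, MeasurableSet (U i))
    (φ : ∀ i, X → Fin (m i) → ℝ) (hφ : ∀ i, ∃ K : ℝ≥0, LipschitzWith K (φ i))
    (hcovX : μX ((⋃ i, U i)ᶜ) = 0)
    (hLDSX : ∀ g : X → ℝ, (∃ K : ℝ≥0, LipschitzWith K g) → ∀ i,
      ∀ᵐ x ∂(μX.restrict (U i)), ∃! v, HasChartDerivAt (φ i) g x v)
    (n : ℕ → ℕ) (V : ℕ → Set Y) (hV : ∀ j, MeasurableSet (V j))
    (ψ : ∀ j, Y → Fin (n j) → ℝ) (hψ : ∀ j, ∃ K : ℝ≥0, LipschitzWith K (ψ j))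
    (hcovY : μY ((⋃ j, V j)ᶜ) = 0)
    (hLDSY : ∀ g : Y → ℝ, (∃ K : ℝ≥0, LipschitzWith K g) → ∀ j,
      ∀ᵐ y ∂(μY.restrict (V j)), ∃! w, HasChartDerivAt (ψ j) g y w) :
    IsDoublingMeasure (μX.prod μY) ∧
    (μX.prod μY) ((⋃ i, ⋃ j, (U i) ×ˢ (V j))ᶜ) = 0 ∧
    (∀ i j, MeasurableSet ((U i) ×ˢ (V j))) ∧
    (∀ i j, ∃ K : ℝ≥0,
      LipschitzWith K (fun z : X × Y => Fin.append (φ i z.1) (ψ j z.2))) ∧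
    ∀ f : X × Y → ℝ, (∃ K : ℝ≥0, LipschitzWith K f) → ∀ i j,
      ∀ᵐ z ∂((μX.prod μY).restrict ((U i) ×ˢ (V j))),
        ∃ (vX : Fin (m i) → ℝ) (vY : Fin (n j) → ℝ),
          HasChartDerivAt (φ i) (fun x => f (x, z.2)) z.1 vX ∧
          HasChartDerivAt (ψ j) (fun y => f (z.1, y)) z.2 vY ∧
          (∀ v', HasChartDerivAt (φ i) (fun x => f (x, z.2)) z.1 v' → v' = vX) ∧
          (∀ w', HasChartDerivAt (ψ j) (fun y => f (z.1, y)) z.2 w' → w' = vY) ∧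
          HasChartDerivAt (fun z' : X × Y => Fin.append (φ i z'.1) (ψ j z'.2)) f z
            (Fin.append vX vY) ∧
          (∀ vw : Fin (m i + n j) → ℝ,
            HasChartDerivAt (fun z' : X × Y => Fin.append (φ i z'.1) (ψ j z'.2)) f z vw →
              vw = Fin.append vX vY) := by
  have := doub_sigmaFinite hdX
  have := doub_sigmaFinite hdY
  have := doub_secondCountable hdX
  have := doub_secondCountable hdY
  have hdP := doub_prod hdX hdY
  refine ⟨hdP, ?_, fun i j => (hU i).prod (hV j), fun i j => ?_, ?_⟩
  · have hsub : (⋃ i, ⋃ j, (U i) ×ˢ (V j))ᶜ ⊆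
        ((⋃ i, U i)ᶜ ×ˢ (univ : Set Y)) ∪ ((univ : Set X) ×ˢ (⋃ j, V j)ᶜ) := by
      rintro ⟨x, y⟩ h
      simp only [mem_compl_iff, mem_iUnion, mem_prod, mem_union, mem_univ, and_true,
        true_and] at h ⊢
      by_contra hcon
      push Not at hcon
      obtain ⟨⟨i, hi⟩, ⟨j, hj⟩⟩ := hcon
      exact h ⟨i, j, hi, hj⟩
    refine measure_mono_null hsub (measure_union_null ?_ ?_)
    · rw [Measure.prod_prod, hcovX, zero_mul]
    · rw [Measure.prod_prod, hcovY, mul_zero]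
  · obtain ⟨K, hK⟩ := hφ i
    obtain ⟨L, hL⟩ := hψ j
    refine ⟨max K L, LipschitzWith.of_dist_le_mul fun z z' => ?_⟩
    refine (dist_pi_le_iff (by positivity)).2 fun k => ?_
    have h1 : dist z.1 z'.1 ≤ dist z z' := by rw [Prod.dist_eq]; exact le_max_left _ _
    have h2 : dist z.2 z'.2 ≤ dist z z' := by rw [Prod.dist_eq]; exact le_max_right _ _
    refine Fin.addCases (fun k => ?_) (fun k => ?_) k
    · simp only [Fin.append_left]
      refine (dist_le_pi_dist _ _ k).trans ((hK.dist_le_mul _ _).trans ?_)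
      gcongr
      exact le_max_left _ _
    · simp only [Fin.append_right]
      refine (dist_le_pi_dist _ _ k).trans ((hL.dist_le_mul _ _).trans ?_)
      gcongr
      exact le_max_right _ _
  intro f hf i j
  obtain ⟨K, hK⟩ := hf
  obtain ⟨Lφ, hLφ⟩ := hφ i
  obtain ⟨Lψ, hLψ⟩ := hψ j
  have hD : ∀ᵐ z ∂((μX.prod μY).restrict ((U i) ×ˢ (V j))), ∀ q k l,
      z ∈ goodS (ψ j) f (dseq (n j) q) (sc k) (sc l) →
        NonPorousAt (goodS (ψ j) f (dseq (n j) q) (sc k) (sc l)) z := by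
    refine ae_restrict_of_ae ?_
    refine ae_all_iff.2 fun q => ae_all_iff.2 fun k => ae_all_iff.2 fun l => ?_
    exact ae_nonPorous hdP (isClosed_goodS hLψ.continuous hK.continuous _ _ _).measurableSet
  have hsl1 : ∀ x : X, LipschitzWith K (fun y => f (x, y)) := fun x =>
    LipschitzWith.of_dist_le_mul fun y y' => by
      simpa [Prod.dist_eq] using hK.dist_le_mul (x, y) (x, y')
  have hsl2 : ∀ y : Y, LipschitzWith K (fun x => f (x, y)) := fun y =>
    LipschitzWith.of_dist_le_mul fun x x' => by
      simpa [Prod.dist_eq] using hK.dist_le_mul (x, y) (x', y)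
  have hYd : ∀ᵐ z ∂((μX.restrict (U i)).prod (μY.restrict (V j))),
      ∃ v, HasChartDerivAt (ψ j) (fun y => f (z.1, y)) z.2 v := by
    refine slice_ae hLψ hK.continuous fun x => ?_
    filter_upwards [hLDSY _ ⟨K, hsl1 x⟩ j] with y hy using hy.exists
  have hXd' : ∀ᵐ z ∂((μY.restrict (V j)).prod (μX.restrict (U i))),
      ∃ v, HasChartDerivAt (φ i) (fun x => f (x, z.1)) z.2 v := by
    refine slice_ae (F := fun z : Y × X => f (z.2, z.1)) hLφ
      (hK.continuous.comp continuous_swap) fun y => ?_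
    filter_upwards [hLDSX _ ⟨K, hsl2 y⟩ i] with x hx using hx.exists
  have hXd : ∀ᵐ z ∂((μX.restrict (U i)).prod (μY.restrict (V j))),
      ∃ v, HasChartDerivAt (φ i) (fun x => f (x, z.2)) z.1 v :=
    (Measure.measurePreserving_swap (μ := μX.restrict (U i))
      (ν := μY.restrict (V j))).quasiMeasurePreserving.ae hXd'
  have hnX := Measure.quasiMeasurePreserving_fst (μ := μX.restrict (U i))
    (ν := μY.restrict (V j)) |>.ae (hLDSX (fun _ => 0) ⟨0, LipschitzWith.const 0⟩ i)
  have hnY := Measure.quasiMeasurePreserving_snd (μ := μX.restrict (U i))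
    (ν := μY.restrict (V j)) |>.ae (hLDSY (fun _ => 0) ⟨0, LipschitzWith.const 0⟩ j)
  rw [Measure.prod_restrict] at hYd hXd hnX hnY
  filter_upwards [hD, hYd, hXd, hnX, hnY] with z hz ⟨vY, hvY⟩ ⟨vX, hvX⟩ hnX hnY
  have huX : ∀ v', HasChartDerivAt (φ i) (fun x => f (x, z.2)) z.1 v' → v' = vX :=
    fun v' hv' => unique_of_zero hnX hv' hvX
  have huY : ∀ v', HasChartDerivAt (ψ j) (fun y => f (z.1, y)) z.2 v' → v' = vY :=
    fun v' hv' => unique_of_zero hnY hv' hvY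
  refine ⟨vX, vY, hvX, hvY, huX, huY, joint hLψ hK hvX hvY hz, fun vw hvw => ?_⟩
  obtain ⟨h1, h2⟩ := slices_of_joint hvw
  rw [← huX _ h1, ← huY _ h2, Fin.append_castAdd_natAdd]
end
end

section
/- Let (X,d_X,μ_X) be a metric measure space with a Borel measure, let −1 < a < 1, let A ⊆ X be μ_X-measurable, and let h > 0. Call a measurable function ρ : X × (0,∞) → [0,∞] admissible if ∫₀^h ρ(x,t) dt ≥ 1 for every x ∈ A. Then: (i) every admissible ρ satisfies ∫_X ∫₀^h ρ(x,t)² t^a dt dμ_X(x) ≥ (1−a) μ_X(A) / h^{1−a}; and (ii) the function ρ₀ := h^{−1} 1_{A×(0,h)} is admissible and satisfies ∫_X ∫₀^h ρ₀(x,t)² t^a dt dμ_X(x) = μ_X(A) / ((1+a) h^{1−a}). Consequently, the 2-modulus (with respect to the weighted measure dμ_a = t^a dt dμ_X on X × (0,∞)) of the family of vertical segments {t ↦ (x,t) : 0 ≤ t ≤ h}, x ∈ A, is comparable to μ_X(A)/h^{1−a}. -/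
open MeasureTheory Metric Filter Set
open scoped ENNReal NNReal

noncomputable section

theorem aux_pow (b h : ℝ) (hb : -1 < b) (hh : 0 < h) :
    ∫⁻ t in Set.Ioc (0 : ℝ) h, ENNReal.ofReal (t ^ b) = ENNReal.ofReal (h ^ (b + 1) / (b + 1)) := by
  have hi : IntegrableOn (fun t : ℝ => t ^ b) (Set.Ioc 0 h) := by
    rw [← intervalIntegrable_iff_integrableOn_Ioc_of_le hh.le]
    exact intervalIntegral.intervalIntegrable_rpow' hb
  rw [← ofReal_integral_eq_lintegral_ofReal hi, ← intervalIntegral.integral_of_le hh.le,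
    integral_rpow (Or.inl hb), Real.zero_rpow (by linarith), sub_zero]
  filter_upwards [ae_restrict_mem measurableSet_Ioc] with t ht
  exact Real.rpow_nonneg ht.1.le _

theorem aux_cs (a h : ℝ) (ha₂ : a < 1) (hh : 0 < h) (f : ℝ → ℝ≥0∞) (hf : Measurable f)
    (h1 : 1 ≤ ∫⁻ t in Set.Ioc (0 : ℝ) h, f t) :
    ENNReal.ofReal (1 - a) / ENNReal.ofReal (h ^ (1 - a)) ≤
      ∫⁻ t in Set.Ioc (0 : ℝ) h, f t ^ 2 * ENNReal.ofReal (t ^ a) := by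
  have hm : ∀ b : ℝ, Measurable fun t : ℝ => ENNReal.ofReal (t ^ b) := fun b => by fun_prop
  have key := ENNReal.lintegral_mul_le_Lp_mul_Lq (volume.restrict (Set.Ioc (0 : ℝ) h))
    Real.HolderConjugate.two_two
    (f := fun t => f t * ENNReal.ofReal (t ^ (a / 2))) (g := fun t => ENNReal.ofReal (t ^ (-a / 2)))
    (hf.mul (hm _)).aemeasurable (hm _).aemeasurable
  have e1 : ∫⁻ t in Set.Ioc (0 : ℝ) h, ((fun t => f t * ENNReal.ofReal (t ^ (a / 2))) *
      (fun t => ENNReal.ofReal (t ^ (-a / 2)))) t = ∫⁻ t in Set.Ioc (0 : ℝ) h, f t := by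
    refine setLIntegral_congr_fun measurableSet_Ioc fun t ht => ?_
    simp only [Pi.mul_apply]
    rw [mul_assoc, ← ENNReal.ofReal_mul (Real.rpow_nonneg ht.1.le _), ← Real.rpow_add ht.1,
      show a / 2 + -a / 2 = 0 by ring]
    simp
  have e2 : ∫⁻ t in Set.Ioc (0 : ℝ) h, (f t * ENNReal.ofReal (t ^ (a / 2))) ^ (2 : ℝ)
      = ∫⁻ t in Set.Ioc (0 : ℝ) h, f t ^ 2 * ENNReal.ofReal (t ^ a) := by
    refine setLIntegral_congr_fun measurableSet_Ioc fun t ht => ?_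
    simp only [ENNReal.rpow_two]
    rw [mul_pow, ← ENNReal.ofReal_pow (Real.rpow_nonneg ht.1.le _), sq (t ^ (a / 2)),
      ← Real.rpow_add ht.1, add_halves]
  have e3 : ∫⁻ t in Set.Ioc (0 : ℝ) h, (ENNReal.ofReal (t ^ (-a / 2))) ^ (2 : ℝ)
      = ENNReal.ofReal (h ^ (1 - a) / (1 - a)) := by
    rw [show (1 - a) = -a + 1 by ring, ← aux_pow (-a) h (by linarith) hh]
    refine setLIntegral_congr_fun measurableSet_Ioc fun t ht => ?_
    simp only [ENNReal.rpow_two]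
    rw [← ENNReal.ofReal_pow (Real.rpow_nonneg ht.1.le _), sq, ← Real.rpow_add ht.1, add_halves]
  rw [e1, e2, e3, ← ENNReal.mul_rpow_of_nonneg _ _ (by norm_num)] at key
  have k2 := h1.trans key
  rw [← ENNReal.one_rpow (1 / 2 : ℝ), ENNReal.rpow_le_rpow_iff (by norm_num)] at k2
  have hp : 0 < h ^ (1 - a) := Real.rpow_pos_of_pos hh _
  rw [← ENNReal.ofReal_div_of_pos hp]
  have hq : 0 < h ^ (1 - a) / (1 - a) := div_pos hp (by linarith)
  rw [← inv_div, ENNReal.ofReal_inv_of_pos hq]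
  rw [← one_div]
  exact ENNReal.div_le_of_le_mul k2

theorem aux_lower {X : Type*} [MeasurableSpace X]
    (μX : Measure X) (a : ℝ) (ha₂ : a < 1)
    (A : Set X) (hA : MeasurableSet A) (h : ℝ) (hh : 0 < h)
    (ρ : X → ℝ → ℝ≥0∞) (hρ : Measurable (Function.uncurry ρ))
    (h1 : ∀ x ∈ A, 1 ≤ ∫⁻ t in Set.Ioc (0 : ℝ) h, ρ x t) :
    ENNReal.ofReal (1 - a) * μX A / ENNReal.ofReal (h ^ (1 - a)) ≤
        ∫⁻ x, (∫⁻ t in Set.Ioc (0 : ℝ) h, ρ x t ^ 2 * ENNReal.ofReal (t ^ a)) ∂μX := by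
  calc _ = ∫⁻ x in A, ENNReal.ofReal (1 - a) / ENNReal.ofReal (h ^ (1 - a)) ∂μX := by
        rw [setLIntegral_const, ENNReal.mul_div_right_comm]
    _ ≤ ∫⁻ x in A, (∫⁻ t in Set.Ioc (0 : ℝ) h, ρ x t ^ 2 * ENNReal.ofReal (t ^ a)) ∂μX :=
        setLIntegral_mono' hA fun x hx =>
          aux_cs a h ha₂ hh (ρ x) (hρ.comp measurable_prodMk_left) (h1 x hx)
    _ ≤ _ := setLIntegral_le_lintegral _ _

theorem aux_meas {X : Type*} [MeasurableSpace X] (A : Set X) (hA : MeasurableSet A) (h : ℝ) :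
    Measurable (Function.uncurry fun (x : X) (t : ℝ) =>
        Set.indicator (A ×ˢ Set.Ioo (0 : ℝ) h) (fun _ => ENNReal.ofReal h⁻¹) (x, t)) :=
  (measurable_const.indicator (hA.prod measurableSet_Ioo) :
    Measurable (Set.indicator (A ×ˢ Set.Ioo (0 : ℝ) h) (fun _ => ENNReal.ofReal h⁻¹)))

theorem aux_adm {X : Type*} (A : Set X) (h : ℝ) (hh : 0 < h) (x : X) (hx : x ∈ A) :
    1 ≤ ∫⁻ t in Set.Ioc (0 : ℝ) h,
        Set.indicator (A ×ˢ Set.Ioo (0 : ℝ) h) (fun _ => ENNReal.ofReal h⁻¹) (x, t) := by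
  rw [setLIntegral_congr (Ioo_ae_eq_Ioc (a := (0 : ℝ)) (b := h)).symm,
    setLIntegral_congr_fun (g := fun _ => ENNReal.ofReal h⁻¹) measurableSet_Ioo
      (fun t ht => Set.indicator_of_mem (Set.mk_mem_prod hx ht) _)]
  rw [setLIntegral_const, Real.volume_Ioo, sub_zero, ← ENNReal.ofReal_mul (by positivity),
    inv_mul_cancel₀ hh.ne']
  simp

theorem aux_energy {X : Type*} [MeasurableSpace X]
    (μX : Measure X) (a : ℝ) (ha₁ : -1 < a)
    (A : Set X) (hA : MeasurableSet A) (h : ℝ) (hh : 0 < h) :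
    ∫⁻ x, (∫⁻ t in Set.Ioc (0 : ℝ) h,
          (Set.indicator (A ×ˢ Set.Ioo (0 : ℝ) h) (fun _ => ENNReal.ofReal h⁻¹) (x, t)) ^ 2 *
            ENNReal.ofReal (t ^ a)) ∂μX =
        μX A / ENNReal.ofReal ((1 + a) * h ^ (1 - a)) := by
  have hp : 0 < h ^ (1 - a) := Real.rpow_pos_of_pos hh _
  have hq : 0 < (1 + a) * h ^ (1 - a) := mul_pos (by linarith) hp
  have e : ∀ x, (∫⁻ t in Set.Ioc (0 : ℝ) h,
          (Set.indicator (A ×ˢ Set.Ioo (0 : ℝ) h) (fun _ => ENNReal.ofReal h⁻¹) (x, t)) ^ 2 *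
            ENNReal.ofReal (t ^ a)) =
      A.indicator (fun _ => (ENNReal.ofReal ((1 + a) * h ^ (1 - a)))⁻¹) x := by
    intro x
    by_cases hx : x ∈ A
    · rw [Set.indicator_of_mem hx, setLIntegral_congr (Ioo_ae_eq_Ioc (a := (0 : ℝ)) (b := h)).symm,
        setLIntegral_congr_fun (g := fun t => ENNReal.ofReal h⁻¹ ^ 2 * ENNReal.ofReal (t ^ a))
          measurableSet_Ioo
          (fun t ht => by
            show _ ^ 2 * _ = _
            rw [Set.indicator_of_mem (Set.mk_mem_prod hx ht)]),
        lintegral_const_mul _ (by fun_prop),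
        setLIntegral_congr (Ioo_ae_eq_Ioc (a := (0 : ℝ)) (b := h)), aux_pow a h ha₁ hh,
        ← ENNReal.ofReal_pow (by positivity), ← ENNReal.ofReal_mul (by positivity),
        ← ENNReal.ofReal_inv_of_pos hq]
      congr 1
      have h2 : h ^ (a + 1) * h ^ (1 - a) = h ^ 2 := by
        rw [← Real.rpow_add hh, show a + 1 + (1 - a) = 2 by ring, Real.rpow_two]
      have : a + 1 ≠ 0 := by linarith
      rw [add_comm 1 a]
      field_simp
      linarith
    · simp [hx]
  simp_rw [e]
  rw [lintegral_indicator_const hA, mul_comm, div_eq_mul_inv]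

/-- Lemma 3.2 of the paper (modulus of the family of vertical segments): for a measurable
set `A ⊆ X` and `h > 0`, with the weighted measure `t^a dt dμ_X` on `X × (0,∞)`:
(i) every admissible density `ρ` (i.e. `∫₀^h ρ(x,t) dt ≥ 1` for all `x ∈ A`) has weighted
energy at least `(1−a) μ_X(A) / h^{1−a}`;
(ii) the density `ρ₀ = h^{−1} 1_{A×(0,h)}` is admissible with energy exactly
`μ_X(A)/((1+a) h^{1−a})`; and consequently
(iii) the 2-modulus of the family of vertical segments over `A` of height `h` is
comparable to `μ_X(A)/h^{1−a}`. -/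
theorem statement11 {X : Type*} [MetricSpace X] [MeasurableSpace X] [BorelSpace X]
    (μX : Measure X) (a : ℝ) (ha₁ : -1 < a) (ha₂ : a < 1)
    (A : Set X) (hA : MeasurableSet A) (h : ℝ) (hh : 0 < h) :
    (∀ ρ : X → ℝ → ℝ≥0∞, Measurable (Function.uncurry ρ) →
      (∀ x ∈ A, 1 ≤ ∫⁻ t in Set.Ioc (0 : ℝ) h, ρ x t) →
      ENNReal.ofReal (1 - a) * μX A / ENNReal.ofReal (h ^ (1 - a)) ≤
        ∫⁻ x, (∫⁻ t in Set.Ioc (0 : ℝ) h, ρ x t ^ 2 * ENNReal.ofReal (t ^ a)) ∂μX) ∧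
    (Measurable (Function.uncurry fun (x : X) (t : ℝ) =>
        Set.indicator (A ×ˢ Set.Ioo (0 : ℝ) h) (fun _ => ENNReal.ofReal h⁻¹) (x, t)) ∧
      (∀ x ∈ A, 1 ≤ ∫⁻ t in Set.Ioc (0 : ℝ) h,
        Set.indicator (A ×ˢ Set.Ioo (0 : ℝ) h) (fun _ => ENNReal.ofReal h⁻¹) (x, t)) ∧
      ∫⁻ x, (∫⁻ t in Set.Ioc (0 : ℝ) h,
          (Set.indicator (A ×ˢ Set.Ioo (0 : ℝ) h) (fun _ => ENNReal.ofReal h⁻¹) (x, t)) ^ 2 *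
            ENNReal.ofReal (t ^ a)) ∂μX =
        μX A / ENNReal.ofReal ((1 + a) * h ^ (1 - a))) ∧
    (ENNReal.ofReal (1 - a) * μX A / ENNReal.ofReal (h ^ (1 - a)) ≤
        (⨅ (ρ : X → ℝ → ℝ≥0∞) (_ : Measurable (Function.uncurry ρ))
          (_ : ∀ x ∈ A, 1 ≤ ∫⁻ t in Set.Ioc (0 : ℝ) h, ρ x t),
          ∫⁻ x, (∫⁻ t in Set.Ioc (0 : ℝ) h, ρ x t ^ 2 * ENNReal.ofReal (t ^ a)) ∂μX) ∧
      (⨅ (ρ : X → ℝ → ℝ≥0∞) (_ : Measurable (Function.uncurry ρ))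
          (_ : ∀ x ∈ A, 1 ≤ ∫⁻ t in Set.Ioc (0 : ℝ) h, ρ x t),
          ∫⁻ x, (∫⁻ t in Set.Ioc (0 : ℝ) h, ρ x t ^ 2 * ENNReal.ofReal (t ^ a)) ∂μX) ≤
        μX A / ENNReal.ofReal ((1 + a) * h ^ (1 - a))) := by
  refine ⟨fun ρ hρ h1 => aux_lower μX a ha₂ A hA h hh ρ hρ h1,
    ⟨aux_meas A hA h, aux_adm A h hh, aux_energy μX a ha₁ A hA h hh⟩,
    le_iInf fun ρ => le_iInf fun hρ => le_iInf fun h1 => aux_lower μX a ha₂ A hA h hh ρ hρ h1, ?_⟩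
  refine iInf_le_of_le (fun (x : X) (t : ℝ) =>
    Set.indicator (A ×ˢ Set.Ioo (0 : ℝ) h) (fun _ => ENNReal.ofReal h⁻¹) (x, t)) ?_
  refine iInf_le_of_le (aux_meas A hA h) ?_
  refine iInf_le_of_le (aux_adm A h hh) ?_
  exact (aux_energy μX a ha₁ A hA h hh).le
end
end

section
/- Let (X,d_X) be a C_q-quasiconvex metric space for some C_q ≥ 1, and let Z = X × ℝ carry the metric d_Z((x₁,y₁),(x₂,y₂)) = max{d_X(x₁,x₂), |y₁ − y₂|}. Then Z₊ := X × (0,∞) is an A-uniform domain in Z with A = 2(2 + C_q): for every pair of points z₁, z₂ ∈ Z₊ there is a rectifiable curve γ in Z₊ joining z₁ to z₂ with length ℓ(γ) ≤ A · d_Z(z₁,z₂) and such that every point z on γ satisfies dist(z, Z ∖ Z₊) ≥ A^{−1} min{ℓ(γ_{z₁,z}), ℓ(γ_{z₂,z})}, where γ_{z₁,z} and γ_{z₂,z} are the subcurves of γ joining z to z₁ and z₂ respectively. -/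
open MeasureTheory Metric Filter Set
open scoped ENNReal NNReal

noncomputable section

theorem aux_prod {X : Type*} [MetricSpace X] (f : ℝ → X) (g : ℝ → ℝ) (s : Set ℝ) :
    eVariationOn (fun t => (f t, g t)) s ≤ eVariationOn f s + eVariationOn g s := by
  unfold eVariationOn
  refine iSup_le fun p => ?_
  calc ∑ i ∈ Finset.range p.1, edist ((f ((p.2 : ℕ → ℝ) (i+1)), g ((p.2 : ℕ → ℝ) (i+1))) : X × ℝ)
          (f ((p.2 : ℕ → ℝ) i), g ((p.2 : ℕ → ℝ) i))
      ≤ ∑ i ∈ Finset.range p.1, (edist (f ((p.2 : ℕ → ℝ) (i+1))) (f ((p.2 : ℕ → ℝ) i)) +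
          edist (g ((p.2 : ℕ → ℝ) (i+1))) (g ((p.2 : ℕ → ℝ) i))) := by
        refine Finset.sum_le_sum fun i _ => ?_
        rw [Prod.edist_eq]
        exact max_le le_self_add le_add_self
    _ ≤ _ := by
        rw [Finset.sum_add_distrib]
        exact add_le_add (eVariationOn.sum_le p.2.2.1 p.2.2.2) (eVariationOn.sum_le p.2.2.1 p.2.2.2)

theorem aux_mono (g : ℝ → ℝ) (a b : ℝ) (hab : a ≤ b) (hg : MonotoneOn g (Set.Icc a b)) :
    eVariationOn g (Set.Icc a b) ≤ ENNReal.ofReal (g b - g a) := by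
  have := hg.eVariationOn_le (left_mem_Icc.2 hab) (right_mem_Icc.2 hab)
  rwa [inter_self] at this

theorem aux_anti (g : ℝ → ℝ) (a b : ℝ) (hab : a ≤ b) (hg : AntitoneOn g (Set.Icc a b)) :
    eVariationOn g (Set.Icc a b) ≤ ENNReal.ofReal (g a - g b) := by
  have h1 := aux_mono (fun t => - g t) a b hab hg.neg
  have h2 : eVariationOn (fun t => - g t) (Set.Icc a b) = eVariationOn g (Set.Icc a b) := by
    unfold eVariationOn
    simp only [edist_neg_neg]
  rw [h2] at h1
  convert h1 using 2
  ring

theorem aux_infDist {X : Type*} [MetricSpace X] (z : X × ℝ) (B : ℝ) (hB : 0 ≤ B) (v : ℝ)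
    (hv : v ≤ B * z.2) :
    ENNReal.ofReal v ≤ ENNReal.ofReal (B * Metric.infDist z {z : X × ℝ | z.2 ≤ 0}) := by
  apply ENNReal.ofReal_le_ofReal
  refine hv.trans (mul_le_mul_of_nonneg_left ?_ hB)
  refine (Metric.le_infDist ⟨(z.1, 0), by simp⟩).2 ?_
  intro w hw
  have hw : w.2 ≤ 0 := hw
  have h1 : dist z.2 w.2 ≤ dist z w := by rw [Prod.dist_eq]; exact le_max_right _ _
  rw [Real.dist_eq] at h1
  linarith [le_abs_self (z.2 - w.2)]

/-- Uniformity of the half-space `Z₊ = X × (0,∞)` in `Z = X × ℝ` (Proposition 4.1 of the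
paper): if `X` is `C_q`-quasiconvex, then any two points of `Z₊` are joined by a curve in
`Z₊` of length at most `A = 2(2+C_q)` times their distance, along which the distance to
the complement of `Z₊` is at least `A⁻¹` times the minimum of the lengths of the two
subcurves to the endpoints.  Here `X × ℝ` carries the sup metric. -/
theorem statement12 {X : Type*} [MetricSpace X] (Cq : ℝ) (hCq : 1 ≤ Cq)
    (hqc : ∀ x y : X, ∃ γ : ℝ → X, ContinuousOn γ (Set.Icc 0 1) ∧ γ 0 = x ∧ γ 1 = y ∧
      eVariationOn γ (Set.Icc 0 1) ≤ ENNReal.ofReal (Cq * dist x y)) :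
    ∀ z₁ z₂ : X × ℝ, 0 < z₁.2 → 0 < z₂.2 →
      ∃ γ : ℝ → X × ℝ, ContinuousOn γ (Set.Icc 0 1) ∧ γ 0 = z₁ ∧ γ 1 = z₂ ∧
        (∀ t ∈ Set.Icc (0 : ℝ) 1, 0 < (γ t).2) ∧
        eVariationOn γ (Set.Icc 0 1) ≤ ENNReal.ofReal (2 * (2 + Cq) * dist z₁ z₂) ∧
        ∀ t ∈ Set.Icc (0 : ℝ) 1,
          min (eVariationOn γ (Set.Icc 0 t)) (eVariationOn γ (Set.Icc t 1)) ≤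
            ENNReal.ofReal
              (2 * (2 + Cq) * Metric.infDist (γ t) {z : X × ℝ | z.2 ≤ 0}) := by
  rintro ⟨x₁, y₁⟩ ⟨x₂, y₂⟩ hy₁ hy₂
  simp only at hy₁ hy₂
  obtain ⟨σ, hσc, hσ0, hσ1, hσv⟩ := hqc x₁ x₂
  set d := dist (x₁, y₁) (x₂, y₂) with hd
  have hd0 : 0 ≤ d := dist_nonneg
  have hdx : dist x₁ x₂ ≤ d := by rw [hd, Prod.dist_eq]; exact le_max_left _ _
  have hdy : |y₁ - y₂| ≤ d := by
    rw [hd, Prod.dist_eq, ← Real.dist_eq]; exact le_max_right _ _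
  obtain ⟨hdy1, hdy2⟩ := abs_le.1 hdy
  obtain ⟨H, hH1, hH2, hHd, hHt, hHa, hHb⟩ : ∃ H : ℝ, y₁ ≤ H ∧ y₂ ≤ H ∧ d ≤ H ∧
      (H - y₁) + (H - y₂) ≤ 3 * d ∧ H - y₁ ≤ 2 * d ∧ H - y₂ ≤ 2 * d := by
    rcases le_total y₁ y₂ with h | h
    · exact ⟨y₂ + d, by linarith, by linarith, by linarith, by linarith, by linarith, by linarith⟩
    · exact ⟨y₁ + d, by linarith, by linarith, by linarith, by linarith, by linarith, by linarith⟩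
  set c : ℝ → ℝ := fun t => max 0 (min 1 (3 * t - 1)) with hc
  set f : ℝ → X := fun t => σ (c t) with hf
  set g : ℝ → ℝ := fun t => min (min H (y₁ + 3 * t * (H - y₁))) (y₂ + 3 * (1 - t) * (H - y₂)) with hg
  have hcm : Monotone c := by
    intro a b hab
    exact max_le_max le_rfl (min_le_min le_rfl (by linarith))
  have hcI : ∀ t, c t ∈ Set.Icc (0:ℝ) 1 := fun t =>
    ⟨le_max_left _ _, max_le zero_le_one (min_le_left _ _)⟩
  have hc0 : ∀ t, t ≤ 1/3 → c t = 0 := fun t ht =>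
    max_eq_left ((min_le_right _ _).trans (by linarith))
  have hc1 : ∀ t, 2/3 ≤ t → c t = 1 := fun t ht => by
    simp only [hc]
    rw [min_eq_left (by linarith), max_eq_right zero_le_one]
  have hga : ∀ t, t ≤ 1/3 → g t = y₁ + 3 * t * (H - y₁) := fun t ht => by
    have h1 : y₁ + 3 * t * (H - y₁) ≤ H := by nlinarith
    have h2 : H ≤ y₂ + 3 * (1 - t) * (H - y₂) := by nlinarith
    simp only [hg]
    rw [min_eq_right h1, min_eq_left (h1.trans h2)]
  have hgb : ∀ t, 1/3 ≤ t → t ≤ 2/3 → g t = H := fun t ht ht' => by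
    have h1 : H ≤ y₁ + 3 * t * (H - y₁) := by nlinarith
    have h2 : H ≤ y₂ + 3 * (1 - t) * (H - y₂) := by nlinarith
    simp only [hg]
    rw [min_eq_left h1, min_eq_left h2]
  have hgc : ∀ t, 2/3 ≤ t → g t = y₂ + 3 * (1 - t) * (H - y₂) := fun t ht => by
    have h1 : H ≤ y₁ + 3 * t * (H - y₁) := by nlinarith
    have h2 : y₂ + 3 * (1 - t) * (H - y₂) ≤ H := by nlinarith
    simp only [hg]
    rw [min_eq_left h1, min_eq_right h2]
  have hgH : ∀ t, g t ≤ H := fun t => (min_le_left _ _).trans (min_le_left _ _)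
  have hg0 : g 0 = y₁ := by rw [hga 0 (by norm_num)]; ring
  have hg1 : g 1 = y₂ := by rw [hgc 1 (by norm_num)]; ring
  have hgm : MonotoneOn g (Set.Icc 0 (2/3)) := by
    intro a ha b hb hab
    rcases le_total b (1/3) with h | h
    · rw [hga a (by linarith), hga b h]
      nlinarith
    · rw [hgb b h hb.2]; exact hgH a
  have hgn : AntitoneOn g (Set.Icc (1/3) 1) := by
    intro a ha b hb hab
    rcases le_total a (2/3) with h | h
    · rw [hgb a ha.1 h]; exact hgH b
    · rw [hgc a h, hgc b (by linarith)]
      nlinarith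
  have hVf : ∀ s, eVariationOn f s ≤ ENNReal.ofReal (Cq * d) := fun s =>
    (eVariationOn.comp_le_of_monotoneOn σ c (hcm.monotoneOn s) (fun t _ => hcI t)).trans
      (hσv.trans (ENNReal.ofReal_le_ofReal (mul_le_mul_of_nonneg_left hdx (by linarith))))
  have hVl : ∀ t, 0 ≤ t → t ≤ 2/3 → eVariationOn g (Set.Icc 0 t) ≤ ENNReal.ofReal (g t - y₁) := by
    intro t h0 h1
    have := aux_mono g 0 t h0 (hgm.mono (Icc_subset_Icc le_rfl h1))
    rwa [hg0] at this
  have hVr : ∀ t, 1/3 ≤ t → t ≤ 1 → eVariationOn g (Set.Icc t 1) ≤ ENNReal.ofReal (g t - y₂) := by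
    intro t h0 h1
    have := aux_anti g t 1 h1 (hgn.mono (Icc_subset_Icc h0 le_rfl))
    rwa [hg1] at this
  have hCd : 0 ≤ Cq * d := by positivity
  refine ⟨fun t => (f t, g t), ?_, ?_, ?_, ?_, ?_, ?_⟩
  · have hcc : Continuous c := by fun_prop
    have hgcont : Continuous g := by fun_prop
    exact (hσc.comp hcc.continuousOn (fun t _ => hcI t)).prodMk hgcont.continuousOn
  · simp only [hf]
    rw [hg0, hc0 0 (by norm_num), hσ0]
  · simp only [hf]
    rw [hg1, hc1 1 (by norm_num), hσ1]
  · intro t ht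
    simp only
    refine lt_min (lt_min (by linarith) ?_) ?_
    · nlinarith [mul_nonneg ht.1 (sub_nonneg.2 hH1)]
    · nlinarith [mul_nonneg (sub_nonneg.2 ht.2) (sub_nonneg.2 hH2)]
  · refine (aux_prod f g _).trans ?_
    have hs := eVariationOn.Icc_add_Icc g (s := Set.univ) (a := 0) (b := 1/2) (c := 1)
      (by norm_num) (by norm_num) (mem_univ _)
    simp only [univ_inter] at hs
    rw [← hs]
    refine (add_le_add (hVf _) (add_le_add (hVl (1/2) (by norm_num) (by norm_num))
      (hVr (1/2) (by norm_num) (by norm_num)))).trans ?_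
    rw [hgb (1/2) (by norm_num) (by norm_num), ← ENNReal.ofReal_add (by linarith) (by linarith),
      ← ENNReal.ofReal_add (by linarith) (by linarith)]
    apply ENNReal.ofReal_le_ofReal
    nlinarith
  · intro t ht
    have hA : 0 ≤ 2 * (2 + Cq) := by linarith
    rcases le_total t (1/3) with h | h
    · refine (min_le_left _ _).trans ((aux_prod f g _).trans ?_)
      have h0 : eVariationOn f (Set.Icc 0 t) = 0 := by
        apply eVariationOn.constant_on
        rintro _ ⟨a, ha, rfl⟩ _ ⟨b, hb, rfl⟩
        simp only [hf]
        rw [hc0 a (ha.2.trans h), hc0 b (hb.2.trans h)]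
      rw [h0, zero_add]
      refine (hVl t ht.1 (by linarith)).trans (aux_infDist (f t, g t) _ hA _ ?_)
      have : 0 ≤ g t := by rw [hga t h]; nlinarith [mul_nonneg ht.1 (sub_nonneg.2 hH1)]
      simp only
      nlinarith
    rcases le_total t (2/3) with h' | h'
    · refine (min_le_left _ _).trans ((aux_prod f g _).trans ?_)
      refine (add_le_add (hVf _) (hVl t ht.1 h')).trans ?_
      rw [← ENNReal.ofReal_add hCd (by rw [hgb t h h']; linarith)]
      refine aux_infDist (f t, g t) _ hA _ ?_
      simp only
      rw [hgb t h h']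
      nlinarith
    · refine (min_le_right _ _).trans ((aux_prod f g _).trans ?_)
      have h0 : eVariationOn f (Set.Icc t 1) = 0 := by
        apply eVariationOn.constant_on
        rintro _ ⟨a, ha, rfl⟩ _ ⟨b, hb, rfl⟩
        simp only [hf]
        rw [hc1 a (h'.trans ha.1), hc1 b (h'.trans hb.1)]
      rw [h0, zero_add]
      refine (hVr t h ht.2).trans (aux_infDist (f t, g t) _ hA _ ?_)
      have : 0 ≤ g t := by
        rw [hgc t h']; nlinarith [mul_nonneg (sub_nonneg.2 ht.2) (sub_nonneg.2 hH2)]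
      simp only
      nlinarith
end
end
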